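/- Let a, b, c, t, k1, k2 be real numbers with a·k1·k2 + b·(k1 + k2) + c = 0, 1 − t·k1 ≠ 0 and 1 − t·k2 ≠ 0, and set k̂1 = k1/(1 − t·k1), k̂2 = k2/(1 − t·k2). Then (a + 2bt + ct²)·k̂1·k̂2 + (b + ct)·(k̂1 + k̂2) + c = 0, and moreover (b + ct)² − (a + 2bt + ct²)·c = b² − ac. -/

import Mathlib

theorem stmt_12 (a b c t k1 k2 : ℝ)
    (hW : a * (k1 * k2) + b * (k1 + k2) + c = 0)
    (h1 : 1 - t * k1 ≠ 0) (h2 : 1 - t * k2 ≠ 0)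
    (kt1 kt2 : ℝ)
    (hkt1 : kt1 = k1 / (1 - t * k1)) (hkt2 : kt2 = k2 / (1 - t * k2)) :
    (a + 2 * b * t + c * t ^ 2) * (kt1 * kt2) + (b + c * t) * (kt1 + kt2) + c = 0 ∧
    (b + c * t) ^ 2 - (a + 2 * b * t + c * t ^ 2) * c = b ^ 2 - a * c := by
  refine ⟨?_, by ring⟩
  subst hkt1 hkt2
  -- Clearing denominators turns the transformed relation back into the original one.
  have key : (a + 2 * b * t + c * t ^ 2) * (k1 / (1 - t * k1) * (k2 / (1 - t * k2)))
      + (b + c * t) * (k1 / (1 - t * k1) + k2 / (1 - t * k2)) + c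
      = (a * (k1 * k2) + b * (k1 + k2) + c) / ((1 - t * k1) * (1 - t * k2)) := by
    field_simp
    ring
  rw [key, hW, zero_div]
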